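/- arXiv:quant-ph/9911117 — 3 statements merged into one kernel-verified Lean document; each statement's English description precedes it below -/
import Mathlib

section
/- Let N ≥ 2, 1 ≤ k ≤ N, and let F be a real number with 0 ≤ F ≤ k/N. Then the density matrix ρ_F on ℂ^N ⊗ ℂ^N belongs to S_k; that is, ρ_F admits a decomposition ρ_F = Σ_i p_i |ψ_i⟩⟨ψ_i| with p_i ≥ 0, Σ_i p_i = 1, and each unit vector ψ_i of Schmidt rank at most k. -/
open Matrix BigOperators
open scoped ComplexOrder

/-- The `n × n` matrix `M_ψ` associated to a vector `ψ ∈ ℂ^α ⊗ ℂ^β`,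
with entries `(M_ψ)_{ij} = ⟨e_i ⊗ e_j, ψ⟩ = ψ (i, j)`. -/
def matOfVec {α β : Type*} (ψ : α × β → ℂ) : Matrix α β ℂ :=
  Matrix.of fun i j => ψ (i, j)

/-- The Schmidt rank of a bipartite vector is the rank of its associated matrix. -/
noncomputable def schmidtRank {α β : Type*} [Fintype β] (ψ : α × β → ℂ) : ℕ :=
  (matOfVec ψ).rank

/-- `ψ` is a unit vector. -/
def IsUnitVec {γ : Type*} [Fintype γ] (ψ : γ → ℂ) : Prop :=
  ∑ x, Complex.normSq (ψ x) = 1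

/-- The outer product `|ψ⟩⟨ψ|`. -/
def outer {γ : Type*} (ψ : γ → ℂ) : Matrix γ γ ℂ :=
  Matrix.of fun x y => ψ x * star (ψ y)

/-- `ρ ∈ S_k`: `ρ` admits a decomposition `ρ = ∑ i, p i • |ψ i⟩⟨ψ i|` with `p i ≥ 0`,
`∑ i, p i = 1`, each `ψ i` a unit vector of Schmidt rank at most `k`. -/
def InSchmidtClass {α : Type*} [Fintype α] (k : ℕ)
    (ρ : Matrix (α × α) (α × α) ℂ) : Prop :=
  ∃ (m : ℕ) (p : Fin m → ℝ) (ψ : Fin m → α × α → ℂ),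
    (∀ i, 0 ≤ p i) ∧ (∑ i, p i) = 1 ∧
    (∀ i, IsUnitVec (ψ i)) ∧ (∀ i, schmidtRank (ψ i) ≤ k) ∧
    ρ = ∑ i, (p i : ℂ) • outer (ψ i)

/-- The map `1 ⊗ Λ`, applying `Λ` to each block of a matrix indexed by `γ × Fin n`. -/
def blockMap {γ : Type*} {n m : ℕ}
    (Λ : Matrix (Fin n) (Fin n) ℂ → Matrix (Fin m) (Fin m) ℂ)
    (X : Matrix (γ × Fin n) (γ × Fin n) ℂ) : Matrix (γ × Fin m) (γ × Fin m) ℂ :=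
  Matrix.of fun a b => Λ (Matrix.of fun s t => X (a.1, s) (b.1, t)) a.2 b.2

/-- `Λ` is Hermiticity-preserving: `Λ(X†) = Λ(X)†`. -/
def HermPreserving {n m : ℕ}
    (Λ : Matrix (Fin n) (Fin n) ℂ → Matrix (Fin m) (Fin m) ℂ) : Prop :=
  ∀ X, Λ Xᴴ = (Λ X)ᴴ

/-- `Λ` is `k`-positive: `(1 ⊗ Λ)(|ψ⟩⟨ψ|)` is positive semidefinite for every
unit vector `ψ ∈ ℂ^N ⊗ ℂ^N` of Schmidt rank at most `k`. -/
def kPositive {N : ℕ} (k : ℕ)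
    (Λ : Matrix (Fin N) (Fin N) ℂ → Matrix (Fin N) (Fin N) ℂ) : Prop :=
  ∀ ψ : Fin N × Fin N → ℂ, IsUnitVec ψ → schmidtRank ψ ≤ k →
    (blockMap Λ (outer ψ)).PosSemidef

/-- The maximally entangled state `Ψ⁺ = (1/√N) ∑ i, e i ⊗ e i`. -/
noncomputable def psiPlus (N : ℕ) : Fin N × Fin N → ℂ :=
  fun x => if x.1 = x.2 then ((Real.sqrt N : ℂ))⁻¹ else 0

/-- The isotropic state `ρ_F = F |Ψ⁺⟩⟨Ψ⁺| + ((1−F)/(N²−1)) (I − |Ψ⁺⟩⟨Ψ⁺|)`. -/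
noncomputable def rhoF (N : ℕ) (F : ℝ) : Matrix (Fin N × Fin N) (Fin N × Fin N) ℂ :=
  (F : ℂ) • outer (psiPlus N) +
    (((1 - F) / ((N : ℝ) ^ 2 - 1) : ℝ) : ℂ) •
      ((1 : Matrix (Fin N × Fin N) (Fin N × Fin N) ℂ) - outer (psiPlus N))

/-- The convex cone generated by the (unnormalised) projections `|φ⟩⟨φ|` with `φ` of Schmidt rank
at most `k`. -/
noncomputable def schmidtCone (α : Type*) [Fintype α] (k : ℕ) :
    AddSubmonoid (Matrix (α × α) (α × α) ℂ) :=
  AddSubmonoid.closure {A | ∃ φ : α × α → ℂ, schmidtRank φ ≤ k ∧ A = outer φ}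

/-- The vector `v ⊗ w̄`. -/
def crossVec {α : Type*} (v w : α → ℂ) : α × α → ℂ := fun x => v x.1 * star (w x.2)

/-- The unnormalised projection `∑ i j, |ii⟩⟨jj|` onto the maximally entangled vector. -/
def maxEntangled (α : Type*) [DecidableEq α] : Matrix (α × α) (α × α) ℂ :=
  Matrix.of fun x y => if x.1 = x.2 ∧ y.1 = y.2 then 1 else 0

lemma outer_smul {γ : Type*} (c : ℝ) (φ : γ → ℂ) :
    outer ((c : ℂ) • φ) = ((c ^ 2 : ℝ) : ℂ) • outer φ := by
  ext x y
  simp [outer]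
  ring

section Cone

variable {α : Type*} [Fintype α] {k : ℕ}

lemma outer_mem_schmidtCone {φ : α × α → ℂ} (h : schmidtRank φ ≤ k) :
    outer φ ∈ schmidtCone α k :=
  AddSubmonoid.subset_closure ⟨φ, h, rfl⟩

lemma schmidtCone_mono {l : ℕ} (h : k ≤ l) : schmidtCone α k ≤ schmidtCone α l :=
  AddSubmonoid.closure_mono fun _ ⟨φ, hφ, e⟩ => ⟨φ, hφ.trans h, e⟩

lemma schmidtRank_smul_le (c : ℂ) (φ : α × α → ℂ) : schmidtRank (c • φ) ≤ schmidtRank φ := by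
  classical
  have : matOfVec (c • φ) = matOfVec φ * (c • (1 : Matrix α α ℂ)) := by
    ext i j
    simp [matOfVec]
  unfold schmidtRank
  rw [this]
  exact Matrix.rank_mul_le_left _ _

lemma smul_mem_schmidtCone {c : ℝ} (hc : 0 ≤ c) {A : Matrix (α × α) (α × α) ℂ}
    (hA : A ∈ schmidtCone α k) : (c : ℂ) • A ∈ schmidtCone α k := by
  induction hA using AddSubmonoid.closure_induction with
  | mem A h =>
    obtain ⟨φ, hφ, rfl⟩ := h
    rw [← Real.sq_sqrt hc, ← outer_smul]
    exact outer_mem_schmidtCone ((schmidtRank_smul_le _ _).trans hφ)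
  | zero => simp
  | add A B _ _ hA hB => rw [smul_add]; exact add_mem hA hB

lemma trace_outer (φ : α × α → ℂ) :
    (outer φ).trace = ((∑ x, Complex.normSq (φ x) : ℝ) : ℂ) := by
  simp [Matrix.trace, outer, Complex.mul_conj]

lemma schmidtRank_crossVec_le (v w : α → ℂ) : schmidtRank (crossVec v w) ≤ 1 :=
  Matrix.rank_vecMulVec_le v (star w)

lemma schmidtRank_sum_crossVec_le {ι : Type*} (s : Finset ι) (v w : ι → α → ℂ) :
    schmidtRank (∑ m ∈ s, crossVec (v m) (w m)) ≤ s.card := by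
  have : matOfVec (∑ m ∈ s, crossVec (v m) (w m)) =
      (Matrix.of fun i (m : s) => v m i) * (Matrix.of fun (m : s) j => star (w m j)) := by
    ext i j
    simp only [matOfVec, crossVec, Matrix.of_apply, Matrix.mul_apply, Finset.sum_apply]
    exact (Finset.sum_coe_sort s fun m => v m i * star (w m j)).symm
  unfold schmidtRank
  rw [this]
  refine (Matrix.rank_mul_le_left _ _).trans ((Matrix.rank_le_card_width _).trans ?_)
  simp

lemma exists_unit_outer [Nonempty α] (hk : 1 ≤ k) {φ : α × α → ℂ} (hφ : schmidtRank φ ≤ k) :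
    ∃ (p : ℝ) (ψ : α × α → ℂ), 0 ≤ p ∧ IsUnitVec ψ ∧ schmidtRank ψ ≤ k ∧
      outer φ = (p : ℂ) • outer ψ := by
  classical
  set n : ℝ := ∑ x, Complex.normSq (φ x) with hn
  have hn0 : 0 ≤ n := Finset.sum_nonneg fun _ _ => Complex.normSq_nonneg _
  rcases hn0.eq_or_lt with h | h
  · have hφ0 : φ = 0 := by
      funext x
      have := (Finset.sum_eq_zero_iff_of_nonneg
        (fun x _ => Complex.normSq_nonneg (φ x))).1 (hn.symm.trans h.symm) x (Finset.mem_univ x)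
      simpa using this
    obtain ⟨a⟩ := ‹Nonempty α›
    refine ⟨0, crossVec (Pi.single a 1) (Pi.single a 1), le_rfl, ?_,
      (schmidtRank_crossVec_le _ _).trans hk, ?_⟩
    · simp [IsUnitVec, crossVec, Fintype.sum_prod_type, Pi.single_apply, apply_ite]
    · ext x y
      simp [hφ0, outer]
  · have hs : (Real.sqrt n)⁻¹ ^ 2 = n⁻¹ := by rw [inv_pow, Real.sq_sqrt hn0]
    refine ⟨n, (((Real.sqrt n)⁻¹ : ℝ) : ℂ) • φ, hn0, ?_, (schmidtRank_smul_le _ _).trans hφ, ?_⟩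
    · simp only [IsUnitVec, Pi.smul_apply, smul_eq_mul, Complex.normSq_mul, Complex.normSq_ofReal,
        ← Finset.mul_sum, ← hn]
      rw [← sq, hs, inv_mul_cancel₀ h.ne']
    · rw [outer_smul, hs, smul_smul, ← Complex.ofReal_mul, mul_inv_cancel₀ h.ne',
        Complex.ofReal_one, one_smul]

lemma inSchmidtClass_of_mem_schmidtCone [Nonempty α] (hk : 1 ≤ k)
    {ρ : Matrix (α × α) (α × α) ℂ} (hρ : ρ ∈ schmidtCone α k) (htr : ρ.trace = 1) :
    InSchmidtClass k ρ := by
  obtain ⟨l, hl, rfl⟩ := AddSubmonoid.exists_list_of_mem_closure hρ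
  have hdec : ∀ i : Fin l.length, ∃ (p : ℝ) (ψ : α × α → ℂ), 0 ≤ p ∧ IsUnitVec ψ ∧
      schmidtRank ψ ≤ k ∧ l[i.1] = (p : ℂ) • outer ψ := fun i => by
    obtain ⟨φ, hφ, e⟩ := hl l[i.1] (List.getElem_mem _)
    rw [e]
    exact exists_unit_outer hk hφ
  choose p ψ hp hψ hr he using hdec
  have hsum : l.sum = ∑ i, (p i : ℂ) • outer (ψ i) := by
    rw [← Fin.sum_univ_getElem]
    exact Finset.sum_congr rfl fun i _ => he i
  refine ⟨l.length, p, ψ, hp, ?_, hψ, hr, hsum⟩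
  rw [hsum, Matrix.trace_sum] at htr
  simp only [IsUnitVec] at hψ
  simp only [Matrix.trace_smul, trace_outer, hψ, Complex.ofReal_one, smul_eq_mul, mul_one] at htr
  exact_mod_cast htr

end Cone

section PairAverage

variable {ι : Type*} [Fintype ι] [DecidableEq ι]

lemma sum_perm_mul_comp (f g : ι → ℂ) (m n : ι) (τ : Equiv.Perm ι) :
    ∑ σ : Equiv.Perm ι, f (σ (τ m)) * g (σ (τ n)) = ∑ σ : Equiv.Perm ι, f (σ m) * g (σ n) :=
  Equiv.sum_comp (Equiv.mulRight τ) fun σ : Equiv.Perm ι => f (σ m) * g (σ n)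

/-- The indicator function of a finset, averaged over all permutations. -/
lemma card_mul_sum_perm_indicator (s : Finset ι) (m : ι) :
    (Fintype.card ι : ℂ) * ∑ σ : Equiv.Perm ι, (if σ m ∈ s then (1 : ℂ) else 0) =
      s.card * (Fintype.card ι).factorial := by
  have h : ∀ n, ∑ σ : Equiv.Perm ι, (if σ n ∈ s then (1 : ℂ) else 0) =
      ∑ σ : Equiv.Perm ι, (if σ m ∈ s then (1 : ℂ) else 0) := fun n => by
    have := sum_perm_mul_comp (fun i => if i ∈ s then (1 : ℂ) else 0) 1 m n (Equiv.swap m n)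
    simpa using this
  calc _ = ∑ n, ∑ σ : Equiv.Perm ι, (if σ n ∈ s then (1 : ℂ) else 0) := by
        simp only [h, Finset.sum_const, Finset.card_univ, nsmul_eq_mul]
    _ = ∑ σ : Equiv.Perm ι, ∑ n, (if n ∈ s then (1 : ℂ) else 0) := by
        rw [Finset.sum_comm]
        exact Finset.sum_congr rfl fun σ _ =>
          Equiv.sum_comp σ fun n => if n ∈ s then (1 : ℂ) else 0
    _ = _ := by simp [Fintype.card_perm, mul_comm]

/-- The pair correlations of the indicator function of a finset, averaged over all permutations. -/
lemma card_mul_sum_perm_indicator_mul (s : Finset ι) (m n : ι) :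
    (Fintype.card ι * (Fintype.card ι - 1) : ℂ) * ∑ σ : Equiv.Perm ι,
        (if σ m ∈ s then (1 : ℂ) else 0) * (if σ n ∈ s then (1 : ℂ) else 0) =
      (s.card * (Fintype.card ι).factorial : ℂ) *
        ((s.card - 1) + (if m = n then (Fintype.card ι - s.card : ℂ) else 0)) := by
  set f : ι → ℂ := fun i => if i ∈ s then (1 : ℂ) else 0 with hf
  have hff : ∀ i, f i * f i = f i := fun i => by simp [hf]
  have h1 := card_mul_sum_perm_indicator s m
  change (Fintype.card ι : ℂ) * ∑ σ : Equiv.Perm ι, f (σ m) = _ at h1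
  change _ * ∑ σ : Equiv.Perm ι, f (σ m) * f (σ n) = _
  by_cases hmn : m = n
  · subst hmn
    simp only [hff, if_true]
    linear_combination (Fintype.card ι - 1 : ℂ) * h1
  · have hconst : ∀ j ∈ Finset.univ.erase m,
        ∑ σ : Equiv.Perm ι, f (σ m) * f (σ j) = ∑ σ : Equiv.Perm ι, f (σ m) * f (σ n) := by
      intro j hj
      have := sum_perm_mul_comp f f m j (Equiv.swap j n)
      rw [Equiv.swap_apply_left, Equiv.swap_apply_of_ne_of_ne (Finset.ne_of_mem_erase hj).symm hmn]
        at this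
      exact this.symm
    have hrow : ∑ j, ∑ σ : Equiv.Perm ι, f (σ m) * f (σ j) =
        s.card * ∑ σ : Equiv.Perm ι, f (σ m) := by
      rw [Finset.sum_comm, Finset.mul_sum]
      refine Finset.sum_congr rfl fun σ _ => ?_
      rw [← Finset.mul_sum, Equiv.sum_comp σ f, mul_comm]
      simp [hf]
    rw [← Finset.add_sum_erase _ _ (Finset.mem_univ m), Finset.sum_congr rfl hconst,
      Finset.sum_const, Finset.card_erase_of_mem (Finset.mem_univ m), Finset.card_univ,
      nsmul_eq_mul, Nat.cast_pred (Fintype.card_pos_iff.2 ⟨m⟩)] at hrow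
    simp only [hff] at hrow
    rw [if_neg hmn]
    linear_combination (Fintype.card ι : ℂ) * hrow + (s.card - 1 : ℂ) * h1

end PairAverage

section Frame

variable {α ι : Type*} [Fintype α] [DecidableEq α] [Fintype ι] [DecidableEq ι]

/-- Mixing the projections onto the spans of `k` elements of a tight frame. -/
lemma maxEntangled_add_frame_mem_schmidtCone {u : ι → α → ℂ} {r : ℝ}
    (hu : ∀ i j, ∑ m, u m i * star (u m j) = if i = j then (r : ℂ) else 0) {k : ℕ} (hk : 1 ≤ k)
    (hkι : k ≤ Fintype.card ι) :
    ((r ^ 2 * (k - 1) : ℝ) : ℂ) • maxEntangled α +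
      ((Fintype.card ι - k : ℝ) : ℂ) • ∑ m, outer (crossVec (u m) (u m)) ∈ schmidtCone α k := by
  obtain ⟨s, hs⟩ := Finset.exists_subset_card_eq (s := (Finset.univ : Finset ι)) hkι
  replace hs := hs.2
  set N := Fintype.card ι
  have hmem : ∑ σ : Equiv.Perm ι,
      outer (∑ m, (if σ m ∈ s then (1 : ℂ) else 0) • crossVec (u m) (u m)) ∈ schmidtCone α k := by
    refine sum_mem fun σ _ => outer_mem_schmidtCone ?_
    simp only [ite_smul, one_smul, zero_smul, ← Finset.sum_filter]
    refine (schmidtRank_sum_crossVec_le _ _ _).trans ?_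
    rw [← hs]
    exact Finset.card_le_card_of_injOn σ (by intro m; simp) σ.injective.injOn
  have hN : (0 : ℝ) ≤ (N : ℝ) * (N - 1) := by
    have : (1 : ℝ) ≤ N := by exact_mod_cast hk.trans hkι
    nlinarith
  have hc : (0 : ℝ) < k * N.factorial := by
    have := N.factorial_pos
    positivity
  have hdiag : ∀ x : α × α, ∑ m, crossVec (u m) (u m) x = if x.1 = x.2 then (r : ℂ) else 0 :=
    fun x => hu x.1 x.2
  have hkey : ((N * (N - 1) : ℝ) : ℂ) • ∑ σ : Equiv.Perm ι,
      outer (∑ m, (if σ m ∈ s then (1 : ℂ) else 0) • crossVec (u m) (u m)) =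
      ((k * N.factorial : ℝ) : ℂ) • (((r ^ 2 * (k - 1) : ℝ) : ℂ) • maxEntangled α +
        ((N - k : ℝ) : ℂ) • ∑ m, outer (crossVec (u m) (u m))) := by
    ext x y
    set q : ι → α × α → ℂ := fun m => crossVec (u m) (u m)
    have hexp : (∑ σ : Equiv.Perm ι,
        outer (∑ m, (if σ m ∈ s then (1 : ℂ) else 0) • q m)) x y =
        ∑ m, ∑ n, (∑ σ : Equiv.Perm ι, (if σ m ∈ s then (1 : ℂ) else 0) *
          (if σ n ∈ s then (1 : ℂ) else 0)) * (q m x * star (q n y)) := by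
      simp only [Matrix.sum_apply, outer, Matrix.of_apply, Finset.sum_apply, Pi.smul_apply,
        smul_eq_mul, star_sum, Finset.sum_mul_sum]
      simp only [Finset.sum_mul]
      rw [Finset.sum_comm]
      refine Finset.sum_congr rfl fun m _ => ?_
      rw [Finset.sum_comm]
      refine Finset.sum_congr rfl fun n _ => Finset.sum_congr rfl fun σ _ => ?_
      split_ifs <;> simp
    have hJ : (∑ m, q m x) * star (∑ n, q n y) = (r : ℂ) ^ 2 * maxEntangled α x y := by
      rw [hdiag, hdiag]
      by_cases h1 : x.1 = x.2 <;> by_cases h2 : y.1 = y.2 <;> simp [maxEntangled, h1, h2, sq]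
    have hpair : ∀ m n, ((N * (N - 1) : ℝ) : ℂ) * ((∑ σ : Equiv.Perm ι,
        (if σ m ∈ s then (1 : ℂ) else 0) * (if σ n ∈ s then (1 : ℂ) else 0)) *
          (q m x * star (q n y))) =
        (k * N.factorial : ℂ) * ((k - 1) * (q m x * star (q n y)) +
          if m = n then (N - k : ℂ) * (q m x * star (q n y)) else 0) := fun m n => by
      have h := card_mul_sum_perm_indicator_mul s m n
      rw [hs] at h
      push_cast
      rw [← mul_assoc, h]
      split_ifs <;> ring
    have hR : (((k * N.factorial : ℝ) : ℂ) • (((r ^ 2 * (k - 1) : ℝ) : ℂ) • maxEntangled α +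
        ((N - k : ℝ) : ℂ) • ∑ m, outer (q m))) x y = (k * N.factorial : ℂ) *
        ((k - 1) * ((r : ℂ) ^ 2 * maxEntangled α x y) +
          (N - k) * ∑ m, q m x * star (q m y)) := by
      simp only [Matrix.smul_apply, Matrix.add_apply, Matrix.sum_apply, outer, Matrix.of_apply,
        smul_eq_mul]
      push_cast
      ring
    rw [hR, ← hJ, Matrix.smul_apply, hexp, smul_eq_mul, Finset.mul_sum]
    simp_rw [Finset.mul_sum (s := Finset.univ) (a := ((N * (N - 1) : ℝ) : ℂ)), hpair,
      ← Finset.mul_sum, Finset.sum_add_distrib, Finset.sum_ite_eq, Finset.mem_univ, if_true,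
      ← Finset.mul_sum, star_sum, ← Finset.sum_mul]
  have hc' : ((k * N.factorial : ℝ) : ℂ) ≠ 0 := by exact_mod_cast hc.ne'
  rw [← inv_smul_eq_iff₀ hc', smul_smul, ← Complex.ofReal_inv, ← Complex.ofReal_mul] at hkey
  rw [← hkey]
  exact smul_mem_schmidtCone (by positivity) hmem

/-- Mixing the projections onto the products of two distinct elements of a tight frame. -/
lemma one_sub_frame_mem_schmidtCone {u : ι → α → ℂ} {r : ℝ}
    (hu : ∀ i j, ∑ m, u m i * star (u m j) = if i = j then (r : ℂ) else 0) :
    ((r ^ 2 : ℝ) : ℂ) • (1 : Matrix (α × α) (α × α) ℂ) -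
      ∑ m, outer (crossVec (u m) (u m)) ∈ schmidtCone α 1 := by
  have hall : ∑ m, ∑ n, outer (crossVec (u m) (u n)) =
      ((r ^ 2 : ℝ) : ℂ) • (1 : Matrix (α × α) (α × α) ℂ) := by
    ext ⟨i, j⟩ ⟨k, l⟩
    have h : ∑ m, ∑ n, outer (crossVec (u m) (u n)) (i, j) (k, l) =
        (∑ m, u m i * star (u m k)) * ∑ n, u n l * star (u n j) := by
      rw [Finset.sum_mul_sum]
      refine Finset.sum_congr rfl fun m _ => Finset.sum_congr rfl fun n _ => ?_
      simp [outer, crossVec]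
      ring
    simp only [Matrix.sum_apply]
    rw [h, hu, hu]
    by_cases h1 : i = k <;> by_cases h2 : j = l <;>
      simp [h1, h2, Ne.symm, eq_comm, sq]
  have hsplit : ((r ^ 2 : ℝ) : ℂ) • (1 : Matrix (α × α) (α × α) ℂ) -
      ∑ m, outer (crossVec (u m) (u m)) =
      ∑ m, ∑ n ∈ Finset.univ.erase m, outer (crossVec (u m) (u n)) := by
    rw [← hall, ← Finset.sum_sub_distrib]
    refine Finset.sum_congr rfl fun m _ => ?_
    rw [sub_eq_iff_eq_add, Finset.sum_erase_add _ _ (Finset.mem_univ m)]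
  rw [hsplit]
  exact sum_mem fun m _ => sum_mem fun n _ =>
    outer_mem_schmidtCone (schmidtRank_crossVec_le _ _)

end Frame

section Phases

variable {N : ℕ}

/-- The projection `∑ i, |ii⟩⟨ii|`. -/
def diagonalProj (α : Type*) [DecidableEq α] : Matrix (α × α) (α × α) ℂ :=
  Matrix.of fun x y => if x = y ∧ x.1 = x.2 then 1 else 0

/-- The discrete Fourier basis of `ℂ^N`, up to normalisation, with its coordinates rotated by the
cube roots of unity with exponents `d`. -/
noncomputable def phasedFourier (N : ℕ) [NeZero N] (d : Fin N → ZMod 3) (m : ZMod N) :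
    Fin N → ℂ :=
  fun i => ZMod.stdAddChar (d i) * ZMod.stdAddChar (m * (i.1 : ZMod N))

lemma stdAddChar_mul_star {n : ℕ} [NeZero n] (a b : ZMod n) :
    (ZMod.stdAddChar a : ℂ) * star (ZMod.stdAddChar b : ℂ) = ZMod.stdAddChar (a - b) := by
  rw [sub_eq_add_neg, AddChar.map_add_eq_mul, AddChar.map_neg_eq_conj]
  rfl

lemma phasedFourier_mul_star [NeZero N] (d : Fin N → ZMod 3) (m : ZMod N) (i j : Fin N) :
    phasedFourier N d m i * star (phasedFourier N d m j) =
      ZMod.stdAddChar (d i - d j) * ZMod.stdAddChar (m * ((i.1 : ZMod N) - (j.1 : ZMod N))) := by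
  rw [mul_sub, ← stdAddChar_mul_star, ← stdAddChar_mul_star]
  simp only [phasedFourier, star_mul']
  ring

lemma natCast_fin_eq_iff [NeZero N] (i j : Fin N) :
    (i.1 : ZMod N) - (j.1 : ZMod N) = 0 ↔ i = j := by
  rw [sub_eq_zero, ZMod.natCast_eq_natCast_iff', Nat.mod_eq_of_lt i.2, Nat.mod_eq_of_lt j.2,
    Fin.ext_iff]

lemma sum_phasedFourier_mul_star [NeZero N] (d : Fin N → ZMod 3) (i j : Fin N) :
    ∑ m, phasedFourier N d m i * star (phasedFourier N d m j) =
      if i = j then ((N : ℝ) : ℂ) else 0 := by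
  simp only [phasedFourier_mul_star]
  rw [← Finset.mul_sum, AddChar.sum_mulShift _ (ZMod.isPrimitive_stdAddChar N)]
  simp only [natCast_fin_eq_iff, ZMod.card]
  by_cases h : i = j <;> simp [h]

lemma card_phases : (Finset.univ : Finset (Fin N → ZMod 3)).card = 3 ^ N := by simp

/-- Averaging over independent phases selects the pairs of equal index pairs. -/
lemma sum_phases (i j k l : Fin N) :
    ∑ d : Fin N → ZMod 3, (ZMod.stdAddChar (d i - d j - (d k - d l)) : ℂ) =
      if (i = j ∧ k = l) ∨ (i = k ∧ j = l) then (3 : ℂ) ^ N else 0 := by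
  split_ifs with h
  · have : ∀ d : Fin N → ZMod 3, d i - d j - (d k - d l) = 0 := fun d => by
      rcases h with ⟨rfl, rfl⟩ | ⟨rfl, rfl⟩ <;> ring
    simp [this]
  · let L : (Fin N → ZMod 3) →+ ZMod 3 :=
      let ev := Pi.evalAddMonoidHom fun _ : Fin N => ZMod 3
      (ev i - ev j) - (ev k - ev l)
    have hL : ∃ d, L d ≠ 0 := by
      have hone : (1 : ZMod 3) ≠ 0 := by decide
      have htwo : (1 : ZMod 3) + 1 ≠ 0 := by decide
      by_cases hij : i = j
      · have hkl : k ≠ l := fun e => h (Or.inl ⟨hij, e⟩)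
        exact ⟨Pi.single k 1, by simp [L, hij, hkl.symm]⟩
      by_cases hik : i = k
      · have hjl : j ≠ l := fun e => h (Or.inr ⟨hik, e⟩)
        exact ⟨Pi.single j 1, by simp [L, hik, hjl.symm]⟩
      · refine ⟨Pi.single i 1, ?_⟩
        by_cases hil : i = l
        · subst hil
          simpa [L, Ne.symm hij, Ne.symm hik, sub_neg_eq_add, Pi.single_apply, eq_comm] using htwo
        · simp [L, Ne.symm hij, Ne.symm hik, Ne.symm hil]
    have hne : (ZMod.stdAddChar (N := 3)).compAddMonoidHom L ≠ 1 := by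
      obtain ⟨d, hd⟩ := hL
      refine AddChar.ne_one_iff.2 ⟨d, fun e => hd ?_⟩
      exact ZMod.injective_stdAddChar (e.trans (AddChar.map_zero_eq_one _).symm)
    exact AddChar.sum_eq_zero_of_ne_one hne

lemma sum_outer_phasedFourier [NeZero N] :
    ∑ d : Fin N → ZMod 3, ∑ m, outer (crossVec (phasedFourier N d m) (phasedFourier N d m)) =
      ((N * 3 ^ N : ℝ) : ℂ) • (maxEntangled (Fin N) + 1 - diagonalProj (Fin N)) := by
  ext ⟨i, j⟩ ⟨k, l⟩
  have hterm : ∀ (d : Fin N → ZMod 3) (m : ZMod N),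
      outer (crossVec (phasedFourier N d m) (phasedFourier N d m)) (i, j) (k, l) =
        ZMod.stdAddChar (d i - d j - (d k - d l)) *
          ZMod.stdAddChar (m * (((i.1 : ZMod N) - (j.1 : ZMod N)) -
            ((k.1 : ZMod N) - (l.1 : ZMod N)))) := fun d m => by
    rw [mul_sub, ← stdAddChar_mul_star (d i - d j),
      ← stdAddChar_mul_star (m * ((i.1 : ZMod N) - (j.1 : ZMod N)))]
    simp only [outer, crossVec, Matrix.of_apply, phasedFourier_mul_star, star_mul']
    ring
  simp only [Matrix.sum_apply, hterm]
  rw [← Finset.sum_mul_sum, sum_phases, ite_mul, zero_mul]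
  have hval : (maxEntangled (Fin N) + 1 - diagonalProj (Fin N)) (i, j) (k, l) =
      if (i = j ∧ k = l) ∨ (i = k ∧ j = l) then 1 else 0 := by
    simp only [maxEntangled, diagonalProj, Matrix.sub_apply, Matrix.add_apply, Matrix.one_apply,
      Matrix.of_apply, Prod.mk.injEq]
    grind
  rw [Matrix.smul_apply, hval, smul_eq_mul, mul_ite, mul_zero]
  split_ifs with h
  · have h0 : ((i.1 : ZMod N) - (j.1 : ZMod N)) - ((k.1 : ZMod N) - (l.1 : ZMod N)) = 0 := by
      rcases h with ⟨rfl, rfl⟩ | ⟨rfl, rfl⟩ <;> ring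
    simp [h0, ZMod.card, mul_comm]
  · rfl

lemma sum_outer_single :
    ∑ m : Fin N, outer (crossVec (Pi.single m 1) (Pi.single m 1)) = diagonalProj (Fin N) := by
  ext ⟨i, j⟩ ⟨k, l⟩
  simp only [Matrix.sum_apply, outer, crossVec, Matrix.of_apply, diagonalProj, Pi.single_apply,
    Prod.mk.injEq]
  rw [Finset.sum_eq_single i (fun m _ hm => by simp [hm.symm]) (by simp)]
  by_cases h1 : i = j
  · subst h1
    by_cases h2 : i = k <;> by_cases h3 : i = l <;> simp [h2, h3, eq_comm]
  · simp [h1, Ne.symm h1]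

lemma sum_single_mul_star (i j : Fin N) :
    ∑ m : Fin N, (Pi.single m 1 : Fin N → ℂ) i * star ((Pi.single m 1 : Fin N → ℂ) j) =
      if i = j then ((1 : ℝ) : ℂ) else 0 := by
  by_cases h : i = j <;> simp [Pi.single_apply, h, apply_ite]

/-- The isotropic state of fidelity `k / N` is proportional to an element of the cone of rank `k`. -/
lemma maximal_isotropic_mem_schmidtCone [NeZero N] {k : ℕ} (hk : 1 ≤ k) (hkN : k ≤ N) :
    ((N * k - 1 : ℝ) : ℂ) • maxEntangled (Fin N) + ((N - k : ℝ) : ℂ) • 1 ∈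
      schmidtCone (Fin N) k := by
  have hN : (N : ℂ) ≠ 0 := NeZero.ne _
  have hstd := maxEntangled_add_frame_mem_schmidtCone (sum_single_mul_star (N := N)) hk
    (by simpa using hkN)
  have hfou := smul_mem_schmidtCone (c := (N * 3 ^ N : ℝ)⁻¹) (by positivity)
    (sum_mem fun (d : Fin N → ZMod 3) (_ : d ∈ Finset.univ) =>
      maxEntangled_add_frame_mem_schmidtCone (sum_phasedFourier_mul_star d) hk
        (by simpa using hkN))
  rw [Finset.sum_add_distrib, ← Finset.smul_sum, ← Finset.smul_sum, sum_outer_phasedFourier,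
    Finset.sum_const, card_phases, ← Nat.cast_smul_eq_nsmul ℂ] at hfou
  rw [sum_outer_single] at hstd
  convert add_mem hstd hfou using 1
  ext x y
  simp
  field_simp
  ring

/-- The isotropic state of fidelity `0` is proportional to an element of the separable cone. -/
lemma minimal_isotropic_mem_schmidtCone [NeZero N] :
    ((N : ℝ) : ℂ) • 1 - maxEntangled (Fin N) ∈ schmidtCone (Fin N) 1 := by
  have hN : (N : ℂ) ≠ 0 := NeZero.ne _
  have hstd := one_sub_frame_mem_schmidtCone (sum_single_mul_star (N := N))
  have hfou := smul_mem_schmidtCone (c := (N * 3 ^ N : ℝ)⁻¹) (by positivity)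
    (sum_mem fun (d : Fin N → ZMod 3) (_ : d ∈ Finset.univ) =>
      one_sub_frame_mem_schmidtCone (sum_phasedFourier_mul_star d))
  rw [Finset.sum_sub_distrib, sum_outer_phasedFourier, Finset.sum_const, card_phases,
    ← Nat.cast_smul_eq_nsmul ℂ] at hfou
  rw [sum_outer_single] at hstd
  convert add_mem hstd hfou using 1
  ext x y
  simp
  field_simp
  ring

lemma outer_psiPlus (N : ℕ) :
    outer (psiPlus N) = ((N : ℂ)⁻¹) • maxEntangled (Fin N) := by
  have hs : ((Real.sqrt N : ℝ) : ℂ) * ((Real.sqrt N : ℝ) : ℂ) = N := by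
    rw [← Complex.ofReal_mul, Real.mul_self_sqrt (Nat.cast_nonneg N), Complex.ofReal_natCast]
  ext x y
  by_cases h1 : x.1 = x.2 <;> by_cases h2 : y.1 = y.2 <;>
    simp [outer, psiPlus, maxEntangled, h1, h2, ← mul_inv, hs]

lemma trace_maxEntangled (N : ℕ) : (maxEntangled (Fin N)).trace = N := by
  simp [Matrix.trace, maxEntangled, Fintype.sum_prod_type, -Finset.sum_boole]

end Phases

/-- For `N ≥ 2`, `1 ≤ k ≤ N` and `0 ≤ F ≤ k/N`, the isotropic state
`ρ_F` belongs to `S_k`. -/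
theorem rhoF_in_schmidt_class {N k : ℕ} (hN : 2 ≤ N) (hk : 1 ≤ k) (hkN : k ≤ N)
    (F : ℝ) (hF0 : 0 ≤ F) (hF : F ≤ (k : ℝ) / N) :
    InSchmidtClass k (rhoF N F) := by
  have : NeZero N := ⟨by omega⟩
  have hN2 : (2 : ℝ) ≤ N := by exact_mod_cast hN
  have hk1 : (1 : ℝ) ≤ k := by exact_mod_cast hk
  have hD : (0 : ℝ) < (N : ℝ) ^ 2 - 1 := by nlinarith
  have hDc : (N : ℂ) ^ 2 - 1 ≠ 0 := by exact_mod_cast hD.ne'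
  have hNc : (N : ℂ) ≠ 0 := NeZero.ne _
  have hkc : (k : ℂ) ≠ 0 := by exact_mod_cast (by omega : k ≠ 0)
  have hkF : 0 ≤ k - N * F := by
    rw [le_div_iff₀ (by linarith)] at hF
    linarith
  refine inSchmidtClass_of_mem_schmidtCone hk ?_ ?_
  · have h1 := smul_mem_schmidtCone (c := F / (k * ((N : ℝ) ^ 2 - 1))) (by positivity)
      (maximal_isotropic_mem_schmidtCone hk hkN)
    have h2 := smul_mem_schmidtCone (c := (k - N * F) / (k * N * ((N : ℝ) ^ 2 - 1)))
      (by positivity) (schmidtCone_mono hk (minimal_isotropic_mem_schmidtCone (N := N)))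
    convert add_mem h1 h2 using 1
    rw [rhoF, outer_psiPlus]
    ext x y
    simp
    field_simp
    ring
  · rw [rhoF, outer_psiPlus]
    simp [Matrix.trace_add, Matrix.trace_sub, Matrix.trace_smul, trace_maxEntangled]
    field_simp
    ring
end

section
/- Let N ≥ 2 and 1 ≤ k ≤ N, and let ψ_k = (1/√k) Σ_{i=1}^k e_i ⊗ e_i ∈ ℂ^N ⊗ ℂ^N. Then the average over the unitary group U(N) with respect to its normalized Haar measure satisfies ∫_{U(N)} (U ⊗ Ū) |ψ_k⟩⟨ψ_k| (U ⊗ Ū)† dU = (k/N)·|Ψ+⟩⟨Ψ+| + ((1 − k/N)/(N² − 1))·(I − |Ψ+⟩⟨Ψ+|), where Ū denotes the entrywise complex conjugate of U and the integral is the Bochner integral of the matrix-valued function. -/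
open Matrix BigOperators
open scoped ComplexOrder

open MeasureTheory Kronecker

attribute [local instance] Matrix.normedAddCommGroup Matrix.normedSpace

noncomputable instance {N : ℕ} : MeasurableSpace (Matrix.unitaryGroup (Fin N) ℂ) := borel _

instance {N : ℕ} : BorelSpace (Matrix.unitaryGroup (Fin N) ℂ) := ⟨rfl⟩

/-- The maximally entangled Schmidt-rank-`k` vector `ψ_k = (1/√k) ∑_{i<k} e i ⊗ e i`. -/
noncomputable def psiK (N k : ℕ) : Fin N × Fin N → ℂ :=
  fun x => if x.1 = x.2 ∧ (x.1 : ℕ) < k then ((Real.sqrt k : ℂ))⁻¹ else 0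

/-- The tensor representation `U ↦ U ⊗ Ū`, on all square matrices. -/
noncomputable def tensorConj {n : Type*} (U : Matrix n n ℂ) : Matrix (n × n) (n × n) ℂ :=
  U ⊗ₖ U.map (starRingEnd ℂ)

lemma tensorConj_apply {n : Type*} (U : Matrix n n ℂ) (a b c d : n) :
    tensorConj U (a, b) (c, d) = U a c * star (U b d) := rfl

lemma tensorConj_one {n : Type*} [DecidableEq n] : tensorConj (1 : Matrix n n ℂ) = 1 := by
  rw [tensorConj, Matrix.map_one _ (map_zero _) (map_one _), one_kronecker_one]

lemma tensorConj_mul {n : Type*} [Fintype n] (U W : Matrix n n ℂ) :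
    tensorConj (U * W) = tensorConj U * tensorConj W := by
  rw [tensorConj, Matrix.map_mul, mul_kronecker_mul]; rfl

lemma tensorConj_conjTranspose {n : Type*} (U : Matrix n n ℂ) :
    tensorConj Uᴴ = (tensorConj U)ᴴ := by
  ext ⟨a, b⟩ ⟨c, d⟩
  simp [tensorConj]

lemma continuous_tensorConj {n : Type*} :
    Continuous (tensorConj : Matrix n n ℂ → Matrix (n × n) (n × n) ℂ) := by
  refine continuous_pi fun x => continuous_pi fun y => ?_
  change Continuous fun U : Matrix n n ℂ => U x.1 y.1 * star (U x.2 y.2)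
  fun_prop

section Unitary

variable {n : Type*} [Fintype n] [DecidableEq n]

lemma tensorConj_conjTranspose_mul_self (U : Matrix.unitaryGroup n ℂ) :
    (tensorConj (U : Matrix n n ℂ))ᴴ * tensorConj (U : Matrix n n ℂ) = 1 := by
  rw [← tensorConj_conjTranspose, ← tensorConj_mul, ← star_eq_conjTranspose,
    Unitary.coe_star_mul_self, tensorConj_one]

lemma compactSpace_unitaryGroup : CompactSpace (Matrix.unitaryGroup n ℂ) := by
  have : ProperSpace (Matrix n n ℂ) := FiniteDimensional.proper ℂ _
  refine isCompact_iff_compactSpace.mp ?_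
  refine Metric.isCompact_of_isClosed_isBounded ?_ ?_
  · exact @isClosed_unitary (Matrix n n ℂ) _ _ instTopologicalSpaceMatrix _ _ _
  · exact isBounded_iff_forall_norm_le.mpr ⟨1, fun U hU => entrywise_sup_norm_bound_of_unitary hU⟩

/-- The average of `X` under conjugation by `U ⊗ Ū`. -/
noncomputable def twirl [MeasurableSpace (Matrix.unitaryGroup n ℂ)]
    (μ : Measure (Matrix.unitaryGroup n ℂ)) (X : Matrix (n × n) (n × n) ℂ) :
    Matrix (n × n) (n × n) ℂ :=
  ∫ U : Matrix.unitaryGroup n ℂ,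
    tensorConj (U : Matrix n n ℂ) * X * (tensorConj (U : Matrix n n ℂ))ᴴ ∂μ

variable [MeasurableSpace (Matrix.unitaryGroup n ℂ)] [BorelSpace (Matrix.unitaryGroup n ℂ)]
  (μ : Measure (Matrix.unitaryGroup n ℂ)) (X : Matrix (n × n) (n × n) ℂ)

lemma integrable_of_continuous_unitaryGroup [IsFiniteMeasure μ] {E : Type*}
    [NormedAddCommGroup E] {f : Matrix.unitaryGroup n ℂ → E} (hf : Continuous f) :
    Integrable f μ := by
  have := compactSpace_unitaryGroup (n := n)
  exact hf.integrable_of_hasCompactSupport (HasCompactSupport.of_compactSpace _)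

lemma map_twirl [IsFiniteMeasure μ] {E : Type*} [NormedAddCommGroup E] [NormedSpace ℂ E]
    [CompleteSpace E] (L : Matrix (n × n) (n × n) ℂ →ₗ[ℂ] E) :
    L (twirl μ X) = ∫ U : Matrix.unitaryGroup n ℂ,
      L (tensorConj (U : Matrix n n ℂ) * X * (tensorConj (U : Matrix n n ℂ))ᴴ) ∂μ := by
  have h : Continuous fun U : Matrix.unitaryGroup n ℂ => tensorConj (U : Matrix n n ℂ) :=
    continuous_tensorConj.comp continuous_subtype_val
  exact ((LinearMap.toContinuousLinearMap L).integral_comp_comm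
    (integrable_of_continuous_unitaryGroup μ
      ((h.matrix_mul continuous_const).matrix_mul h.matrix_conjTranspose))).symm

lemma commute_twirl [IsFiniteMeasure μ] [μ.IsMulLeftInvariant] (W : Matrix.unitaryGroup n ℂ) :
    Commute (twirl μ X) (tensorConj (W : Matrix n n ℂ)) := by
  have hconj : tensorConj (W : Matrix n n ℂ) * twirl μ X * (tensorConj (W : Matrix n n ℂ))ᴴ
      = twirl μ X := by
    have h := map_twirl μ X ((LinearMap.mulRight ℂ (tensorConj (W : Matrix n n ℂ))ᴴ).comp
      (LinearMap.mulLeft ℂ (tensorConj (W : Matrix n n ℂ))))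
    simp only [LinearMap.comp_apply, LinearMap.mulRight_apply, LinearMap.mulLeft_apply] at h
    rw [h, twirl, ← integral_mul_left_eq_self (fun U : Matrix.unitaryGroup n ℂ =>
      tensorConj (U : Matrix n n ℂ) * X * (tensorConj (U : Matrix n n ℂ))ᴴ) W]
    congr 1
    ext1 U
    simp only [Submonoid.coe_mul, tensorConj_mul, conjTranspose_mul, Matrix.mul_assoc]
  have h := congrArg (· * tensorConj (W : Matrix n n ℂ)) hconj
  simp only [Matrix.mul_assoc, tensorConj_conjTranspose_mul_self, Matrix.mul_one] at h
  exact h.symm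

lemma trace_mul_twirl [IsProbabilityMeasure μ] (M : Matrix (n × n) (n × n) ℂ)
    (hM : ∀ U : Matrix.unitaryGroup n ℂ, Commute M (tensorConj (U : Matrix n n ℂ))) :
    (M * twirl μ X).trace = (M * X).trace := by
  have h := map_twirl μ X ((traceLinearMap (n × n) ℂ ℂ).comp (LinearMap.mulLeft ℂ M))
  simp only [LinearMap.comp_apply, LinearMap.mulLeft_apply, traceLinearMap_apply] at h
  rw [h]
  have hconst : ∀ U : Matrix.unitaryGroup n ℂ,
      (M * (tensorConj (U : Matrix n n ℂ) * X * (tensorConj (U : Matrix n n ℂ))ᴴ)).trace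
        = (M * X).trace := fun U => by
    rw [← Matrix.mul_assoc, ← Matrix.mul_assoc, (hM U).eq, Matrix.trace_mul_comm,
      ← Matrix.mul_assoc, ← Matrix.mul_assoc, tensorConj_conjTranspose_mul_self, Matrix.one_mul]
  simp [hconst]

end Unitary

section Commutant

variable {n : Type*} [DecidableEq n]

/-- The infinitesimal version `A ↦ A ⊗ 1 - 1 ⊗ Aᵀ` of `tensorConj`. -/
noncomputable def tensorAd : Matrix n n ℂ →ₗ[ℂ] Matrix (n × n) (n × n) ℂ where
  toFun A := A ⊗ₖ 1 - 1 ⊗ₖ Aᵀ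
  map_add' A B := by
    rw [add_kronecker, transpose_add, kronecker_add]; abel
  map_smul' c A := by
    rw [smul_kronecker, transpose_smul, kronecker_smul, ← smul_sub]; rfl

lemma tensorAd_apply (A : Matrix n n ℂ) : tensorAd A = A ⊗ₖ 1 - 1 ⊗ₖ Aᵀ := rfl

/-- For `i ≠ j` and a phase `w`, the projection onto the line spanned by `w e i + e j`. -/
noncomputable def phaseProjection (i j : n) (w : ℂ) : Matrix n n ℂ :=
  (1 / 2 : ℂ) • (Matrix.single i i 1 + Matrix.single j j 1 + w • Matrix.single i j 1
    + star w • Matrix.single j i 1)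

lemma isHermitian_phaseProjection (i j : n) (w : ℂ) : (phaseProjection i j w).IsHermitian := by
  simp only [Matrix.IsHermitian, phaseProjection, conjTranspose_smul, conjTranspose_add,
    conjTranspose_single, star_star, star_one, star_div₀, star_ofNat]
  module

lemma single_eq_phaseProjection (i j : n) : (Matrix.single i j 1 : Matrix n n ℂ) =
    phaseProjection i j 1 + Complex.I • phaseProjection i j (-Complex.I)
      - ((1 + Complex.I) / 2) • (Matrix.single i i 1 + Matrix.single j j 1) := by
  ext a b
  simp only [phaseProjection, Matrix.add_apply, Matrix.sub_apply, Matrix.smul_apply, smul_eq_mul,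
    star_one, star_neg, Complex.star_def, Complex.conj_I]
  linear_combination (1 / 2 * (Matrix.single i j (1 : ℂ) a b)
    - 1 / 2 * (Matrix.single j i (1 : ℂ) a b)) * Complex.I_sq

variable [Fintype n] {T : Matrix (n × n) (n × n) ℂ}

lemma one_add_smul_mem_unitaryGroup {P : Matrix n n ℂ} (hP : P.IsHermitian)
    (hPP : P * P = P) {z : ℂ} (hz : star z * z = 1) :
    1 + (z - 1) • P ∈ Matrix.unitaryGroup n ℂ := by
  rw [mem_unitaryGroup_iff', star_eq_conjTranspose, conjTranspose_add, conjTranspose_smul,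
    conjTranspose_one, hP.eq]
  simp only [add_mul, mul_add, smul_mul_assoc, mul_smul_comm, hPP, one_mul, mul_one]
  match_scalars
  · ring
  · rw [star_sub, star_one]
    linear_combination hz

lemma commute_tensorAd_of_projection
    (hT : ∀ U : Matrix.unitaryGroup n ℂ, Commute T (tensorConj (U : Matrix n n ℂ)))
    {P : Matrix n n ℂ} (hP : P.IsHermitian) (hPP : P * P = P) : Commute T (tensorAd P) := by
  have h₁ := hT ⟨_, one_add_smul_mem_unitaryGroup hP hPP (z := Complex.I) (by simp)⟩
  have h₂ := hT ⟨_, one_add_smul_mem_unitaryGroup hP hPP (z := -Complex.I) (by simp)⟩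
  have key : tensorAd P = (-Complex.I / 2) • (tensorConj (1 + (Complex.I - 1) • P)
      - tensorConj (1 + (-Complex.I - 1) • P)) := by
    ext ⟨a, b⟩ ⟨c, d⟩
    have hbd : star (P b d) = P d b := hP.apply d b
    have hone : star ((1 : Matrix n n ℂ) b d) = (1 : Matrix n n ℂ) b d := by
      rw [Matrix.one_apply]; split_ifs <;> simp
    simp only [tensorAd_apply, Matrix.sub_apply, Matrix.smul_apply, tensorConj_apply,
      Matrix.add_apply, star_add, star_mul', hbd, hone, kronecker_apply, transpose_apply,
      smul_eq_mul, star_sub, star_neg, star_one, Complex.star_def, Complex.conj_I]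
    linear_combination (P a c * (1 : Matrix n n ℂ) b d
      - (1 : Matrix n n ℂ) a c * P d b) * Complex.I_sq
  rw [key]
  exact (h₁.sub_right h₂).smul_right _

lemma phaseProjection_mul_self {i j : n} (hij : i ≠ j) {w : ℂ} (hw : star w * w = 1) :
    phaseProjection i j w * phaseProjection i j w = phaseProjection i j w := by
  simp only [phaseProjection, smul_mul_assoc, mul_smul_comm, add_mul, mul_add,
    Matrix.single_mul_single_same, Matrix.single_mul_single_of_ne _ _ _ _ hij,
    Matrix.single_mul_single_of_ne _ _ _ _ hij.symm, smul_zero, mul_one]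
  match_scalars <;> first | ring1 | linear_combination (1 / 4 : ℂ) * hw

lemma commute_tensorAd_single
    (hT : ∀ U : Matrix.unitaryGroup n ℂ, Commute T (tensorConj (U : Matrix n n ℂ)))
    (i j : n) : Commute T (tensorAd (Matrix.single i j 1)) := by
  have hdiag : ∀ i, Commute T (tensorAd (Matrix.single i i 1)) := fun i =>
    commute_tensorAd_of_projection hT (by simp [Matrix.IsHermitian]) (by simp)
  rcases eq_or_ne i j with rfl | hij
  · exact hdiag i
  have hphase : ∀ w : ℂ, star w * w = 1 → Commute T (tensorAd (phaseProjection i j w)) :=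
    fun w hw => commute_tensorAd_of_projection hT (isHermitian_phaseProjection i j w)
      (phaseProjection_mul_self hij hw)
  rw [single_eq_phaseProjection, map_sub, map_add, map_smul, map_smul, map_add]
  exact ((hphase 1 (by simp)).add_right ((hphase (-Complex.I) (by simp)).smul_right _)).sub_right
    (((hdiag i).add_right (hdiag j)).smul_right _)

lemma apply_relation_of_commute_tensorAd_single {i j : n}
    (h : Commute T (tensorAd (Matrix.single i j 1))) (a b c d : n) :
    (if i = a then T (j, b) (c, d) else 0) - (if j = b then T (a, i) (c, d) else 0) =
      (if j = c then T (a, b) (i, d) else 0) - (if i = d then T (a, b) (c, j) else 0) := by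
  have h' := congrFun (congrFun h.eq (a, b)) (c, d)
  simp only [tensorAd_apply, Matrix.mul_sub, Matrix.sub_mul, Matrix.sub_apply] at h'
  simp only [Matrix.mul_apply, Fintype.sum_prod_type, kronecker_apply, transpose_apply, Matrix.single_apply,
    Matrix.one_apply] at h'
  simp only [ite_and, mul_ite, ite_mul, mul_one, one_mul, mul_zero, zero_mul,
    Finset.sum_ite_eq, Finset.sum_ite_eq', Finset.mem_univ, if_true, Finset.sum_ite_irrel,
    Finset.sum_const_zero] at h'
  exact h'.symm

lemma exists_eq_of_commute_tensorConj [Nontrivial n]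
    (hT : ∀ U : Matrix.unitaryGroup n ℂ, Commute T (tensorConj (U : Matrix n n ℂ))) :
    ∃ α β : ℂ, ∀ a b c d, T (a, b) (c, d) =
      (if a = c ∧ b = d then α else 0) + (if a = b ∧ c = d then β else 0) := by
  have R i j a b c d :=
    apply_relation_of_commute_tensorAd_single (commute_tensorAd_single hT i j) a b c d
  have hsupp : ∀ a b c d, ¬ (a = c ∧ b = d) → ¬ (a = b ∧ c = d) → T (a, b) (c, d) = 0 := by
    intro a b c d h₁ h₂
    by_cases hab : a = b
    · have := R c c a b c d
      clear R
      grind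
    · by_cases hac : a = c
      · have := R b b a b c d
        clear R
        grind
      · have := R a a a b c d
        clear R
        grind
  have hrow : ∀ i j b, i ≠ b → j ≠ b → T (i, b) (i, b) = T (j, b) (j, b) := by
    intro i j b hi hj
    have := R i j i b j b
    clear R hsupp
    grind
  have hcol : ∀ a i j, a ≠ i → a ≠ j → T (a, i) (a, i) = T (a, j) (a, j) := by
    intro a i j hi hj
    have := R i j a j a i
    clear R hsupp hrow
    grind
  have h₁ : ∀ i j, i ≠ j → T (j, i) (j, i) = T (i, i) (i, i) - T (i, i) (j, j) := by
    intro i j hij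
    have := R i j i i j i
    clear R hsupp hrow hcol
    grind
  have h₂ : ∀ i j, i ≠ j → T (j, i) (j, i) = T (j, j) (j, j) - T (j, j) (i, i) := by
    intro i j hij
    have := R i j j j j i
    clear R hsupp hrow hcol h₁
    grind
  have h₃ : ∀ i j, i ≠ j → T (i, j) (i, j) = T (i, i) (i, i) - T (j, j) (i, i) := by
    intro i j hij
    have := R i j i j i i
    clear R hsupp hrow hcol h₁ h₂
    grind
  have hswap : ∀ i j, i ≠ j → T (j, i) (j, i) = T (i, j) (i, j) := fun i j hij =>
    (h₂ i j hij).trans (h₁ j i hij.symm).symm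
  have hdiag : ∀ i j, T (i, i) (i, i) = T (j, j) (j, j) := by
    intro i j
    rcases eq_or_ne i j with rfl | hij
    · rfl
    linear_combination h₂ i j hij - h₃ i j hij - hswap i j hij
  have hoff : ∀ a b c d, a ≠ b → c ≠ d → T (a, b) (a, b) = T (c, d) (c, d) := by
    intro a b c d hab hcd
    rcases eq_or_ne a d with rfl | had
    · rw [← hswap a b hab, hrow b c a hab.symm hcd]
    · rw [hcol a b d hab had, hrow a c d had hcd]
  obtain ⟨p, q, hpq⟩ := exists_pair_ne n
  refine ⟨T (p, q) (p, q), T (p, p) (p, p) - T (p, q) (p, q), fun a b c d => ?_⟩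
  by_cases hac : a = c ∧ b = d
  · obtain ⟨rfl, rfl⟩ := hac
    rcases eq_or_ne a b with rfl | hab
    · simp [hdiag a p]
    · simp [hab, hoff a b p q hab hpq]
  · by_cases hab : a = b ∧ c = d
    · obtain ⟨rfl, rfl⟩ := hab
      have hac' : a ≠ c := fun h => hac ⟨h, h⟩
      rw [if_neg hac, if_pos ⟨rfl, rfl⟩]
      linear_combination h₁ a c hac' + hdiag a p - hoff c a p q hac'.symm hpq
    · rw [hsupp a b c d hac hab, if_neg hac, if_neg hab, add_zero]

end Commutant

section MaximallyEntangled

variable {n : Type*} [DecidableEq n]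

/-- The unnormalized projection onto `∑ i, e i ⊗ e i`. -/
def diagPairing (n : Type*) [DecidableEq n] : Matrix (n × n) (n × n) ℂ :=
  Matrix.of fun x y => if x.1 = x.2 ∧ y.1 = y.2 then 1 else 0

lemma commute_diagPairing [Fintype n] (U : Matrix.unitaryGroup n ℂ) :
    Commute (diagPairing n) (tensorConj (U : Matrix n n ℂ)) := by
  have h₁ : (U : Matrix n n ℂ)ᴴ * (U : Matrix n n ℂ) = 1 := Unitary.coe_star_mul_self U
  have h₂ : (U : Matrix n n ℂ) * (U : Matrix n n ℂ)ᴴ = 1 := Unitary.coe_mul_star_self U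
  ext ⟨a, b⟩ ⟨c, d⟩
  have h₁' := congrFun (congrFun h₁ d) c
  have h₂' := congrFun (congrFun h₂ a) b
  simp only [Matrix.mul_apply, conjTranspose_apply, Matrix.one_apply] at h₁' h₂'
  simp only [Matrix.mul_apply, Fintype.sum_prod_type, diagPairing, of_apply, tensorConj_apply,
    ite_and, ite_mul, mul_ite, one_mul, mul_one, zero_mul, mul_zero, Finset.sum_ite_irrel,
    Finset.sum_const_zero, Finset.sum_ite_eq, Finset.mem_univ, if_true]
  simp only [mul_comm (star _)] at h₁'
  rw [h₁', h₂']
  grind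

lemma trace_diagPairing_mul [Fintype n] (X : Matrix (n × n) (n × n) ℂ) :
    (diagPairing n * X).trace = ∑ a, ∑ b, X (a, a) (b, b) := by
  simp only [Matrix.trace, diag_apply, Matrix.mul_apply, Fintype.sum_prod_type, diagPairing,
    of_apply, ite_and, ite_mul, one_mul, zero_mul, Finset.sum_ite_irrel, Finset.sum_const_zero,
    Finset.sum_ite_eq, Finset.mem_univ, if_true]
  exact Finset.sum_comm

end MaximallyEntangled

lemma inv_sqrt_mul_star_inv_sqrt (m : ℕ) :
    ((Real.sqrt m : ℂ))⁻¹ * star ((Real.sqrt m : ℂ))⁻¹ = (m : ℂ)⁻¹ := by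
  rw [star_inv₀, Complex.star_def, Complex.conj_ofReal, ← mul_inv, ← Complex.ofReal_mul,
    Real.mul_self_sqrt (Nat.cast_nonneg m), Complex.ofReal_natCast]

lemma ite_mul_star_ite (p q : Prop) [Decidable p] [Decidable q] (x : ℂ) :
    (if p then x else 0) * star (if q then x else 0) = if p ∧ q then x * star x else 0 := by
  by_cases hp : p <;> by_cases hq : q <;> simp [hp, hq]

lemma outer_psiPlus_apply {N : ℕ} (a b c d : Fin N) :
    outer (psiPlus N) (a, b) (c, d) = if a = b ∧ c = d then (N : ℂ)⁻¹ else 0 := by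
  rw [← inv_sqrt_mul_star_inv_sqrt]
  exact ite_mul_star_ite _ _ _

lemma outer_psiK_apply {N k : ℕ} (a b c d : Fin N) :
    outer (psiK N k) (a, b) (c, d) =
      if (a = b ∧ (a : ℕ) < k) ∧ (c = d ∧ (c : ℕ) < k) then (k : ℂ)⁻¹ else 0 := by
  rw [← inv_sqrt_mul_star_inv_sqrt]
  exact ite_mul_star_ite _ _ _

lemma sum_fin_ite_val_lt {N k : ℕ} (hkN : k ≤ N) (c : ℂ) :
    ∑ a : Fin N, (if (a : ℕ) < k then c else 0) = k * c := by
  rw [← Finset.sum_filter, Finset.sum_const, Fin.card_filter_val_lt, min_eq_right hkN,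
    nsmul_eq_mul]

lemma trace_outer_psiK {N k : ℕ} (hk : 1 ≤ k) (hkN : k ≤ N) : (outer (psiK N k)).trace = 1 := by
  have hk0 : (k : ℂ) ≠ 0 := Nat.cast_ne_zero.mpr (by omega)
  simp only [Matrix.trace, diag_apply, Fintype.sum_prod_type, outer_psiK_apply, and_self, ite_and,
    Finset.sum_ite_eq, Finset.mem_univ, if_true]
  rw [sum_fin_ite_val_lt hkN, mul_inv_cancel₀ hk0]

lemma trace_diagPairing_mul_outer_psiK {N k : ℕ} (hk : 1 ≤ k) (hkN : k ≤ N) :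
    (diagPairing (Fin N) * outer (psiK N k)).trace = k := by
  have hk0 : (k : ℂ) ≠ 0 := Nat.cast_ne_zero.mpr (by omega)
  simp only [trace_diagPairing_mul, outer_psiK_apply, true_and, ite_and, Finset.sum_ite_irrel,
    Finset.sum_const_zero]
  rw [sum_fin_ite_val_lt hkN, sum_fin_ite_val_lt hkN, mul_inv_cancel₀ hk0, mul_one]

/-- Twirling `|ψ_k⟩⟨ψ_k|` over the unitary group with its normalized Haar
measure yields `(k/N)|Ψ⁺⟩⟨Ψ⁺| + ((1 − k/N)/(N² − 1))(I − |Ψ⁺⟩⟨Ψ⁺|)`, i.e. `ρ_{F = k/N}`. -/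
theorem twirl_psiK {N k : ℕ} (hN : 2 ≤ N) (hk : 1 ≤ k) (hkN : k ≤ N)
    (μ : Measure (Matrix.unitaryGroup (Fin N) ℂ))
    [μ.IsHaarMeasure] [IsProbabilityMeasure μ] :
    ∫ U : Matrix.unitaryGroup (Fin N) ℂ,
        (((U : Matrix (Fin N) (Fin N) ℂ) ⊗ₖ ((U : Matrix (Fin N) (Fin N) ℂ).map (starRingEnd ℂ)))
          * outer (psiK N k) *
          (((U : Matrix (Fin N) (Fin N) ℂ) ⊗ₖ ((U : Matrix (Fin N) (Fin N) ℂ).map (starRingEnd ℂ)))ᴴ)) ∂μ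
      = rhoF N ((k : ℝ) / N) := by
  change twirl μ (outer (psiK N k)) = _
  have : Nontrivial (Fin N) := Fin.nontrivial_iff_two_le.mpr hN
  obtain ⟨α, β, hT⟩ := exists_eq_of_commute_tensorConj (commute_twirl μ (outer (psiK N k)))
  have htr := trace_mul_twirl μ (outer (psiK N k)) 1 fun U => Commute.one_left _
  have hpair := trace_mul_twirl μ (outer (psiK N k)) (diagPairing (Fin N)) commute_diagPairing
  rw [one_mul, one_mul, trace_outer_psiK hk hkN] at htr
  rw [trace_diagPairing_mul_outer_psiK hk hkN, trace_diagPairing_mul] at hpair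
  simp only [Matrix.trace, diag_apply, Fintype.sum_prod_type, hT, and_self, if_true,
    Finset.sum_add_distrib, Finset.sum_ite_eq, Finset.mem_univ, Finset.sum_const,
    Finset.card_univ, Fintype.card_prod, Fintype.card_fin, Nat.cast_mul, nsmul_eq_mul] at htr hpair
  have hN0 : (N : ℂ) ≠ 0 := Nat.cast_ne_zero.mpr (by omega)
  have hN1 : (N : ℂ) ^ 2 - 1 ≠ 0 := by
    rw [sub_ne_zero]
    exact_mod_cast (Nat.one_lt_pow two_ne_zero hN).ne'
  have hα : α = (1 - (k : ℂ) / N) / ((N : ℂ) ^ 2 - 1) := by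
    rw [eq_div_iff hN1]
    field_simp
    linear_combination N * htr - hpair
  have hβ : β = ((k : ℂ) / N - α) * (N : ℂ)⁻¹ := by
    field_simp
    linear_combination hpair
  ext ⟨a, b⟩ ⟨c, d⟩
  rw [hT]
  simp only [rhoF, Matrix.add_apply, Matrix.smul_apply, Matrix.sub_apply, outer_psiPlus_apply,
    Matrix.one_apply, Prod.mk.injEq, smul_eq_mul]
  push_cast
  rw [← hα, hβ]
  split_ifs <;> ring
end

section
/- Let N = 2 and F = 1/√2, and let ρ_F be the corresponding density matrix on ℂ² ⊗ ℂ². Then ρ_F ⊗ ρ_F, regarded as a density matrix on ℂ⁴ ⊗ ℂ⁴ via the reordering isomorphism that groups the two 'Alice' qubits together and the two 'Bob' qubits together, belongs to S_2: it admits a decomposition into pure states each of Schmidt rank at most 2 across the (A₁A₂):(B₁B₂) cut. -/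
open Matrix BigOperators
open scoped ComplexOrder

/-- The Kronecker product `ρ ⊗ σ` of bipartite states, with indices regrouped via the
reordering isomorphism `(ℂ^α ⊗ ℂ^α) ⊗ (ℂ^β ⊗ ℂ^β) ≅ (ℂ^α ⊗ ℂ^β) ⊗ (ℂ^α ⊗ ℂ^β)` so that the
first factor collects the two Alice systems and the second the two Bob systems. -/
def reorderedKron {α β : Type*}
    (ρ : Matrix (α × α) (α × α) ℂ) (σ : Matrix (β × β) (β × β) ℂ) :
    Matrix ((α × β) × (α × β)) ((α × β) × (α × β)) ℂ :=
  Matrix.of fun x y =>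
    ρ (x.1.1, x.2.1) (y.1.1, y.2.1) * σ (x.1.2, x.2.2) (y.1.2, y.2.2)

open scoped Kronecker

/-- A finite mixture over an arbitrary index type of unit vectors of Schmidt rank at most `k`
lies in `S_k`. -/
theorem InSchmidtClass.of_fintype {α ι : Type*} [Fintype α] [Fintype ι] {k : ℕ}
    {ρ : Matrix (α × α) (α × α) ℂ} (p : ι → ℝ) (ψ : ι → α × α → ℂ)
    (hp : ∀ i, 0 ≤ p i) (hsum : ∑ i, p i = 1) (hunit : ∀ i, IsUnitVec (ψ i))
    (hrank : ∀ i, schmidtRank (ψ i) ≤ k) (hρ : ρ = ∑ i, (p i : ℂ) • outer (ψ i)) :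
    InSchmidtClass k ρ := by
  let e := (Fintype.equivFin ι).symm
  refine ⟨Fintype.card ι, p ∘ e, ψ ∘ e, fun i => hp _, ?_, fun i => hunit _,
    fun i => hrank _, ?_⟩
  · rw [← hsum]
    exact e.sum_comp p
  · rw [hρ]
    exact (e.sum_comp fun i => (p i : ℂ) • outer (ψ i)).symm

/-- The bipartite vector whose associated matrix is `A`. -/
def vecOfMat {α β : Type*} (A : Matrix α β ℂ) : α × β → ℂ := fun x => A x.1 x.2

/-- The rank of an idempotent matrix is its trace. -/
theorem rank_eq_trace_of_isIdempotentElem {n : Type*} [Fintype n] [DecidableEq n]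
    {A : Matrix n n ℂ} (hA : IsIdempotentElem A) : (A.rank : ℂ) = A.trace := by
  have h : IsIdempotentElem (Matrix.toLin' A) := by
    rw [IsIdempotentElem, Module.End.mul_eq_comp, ← Matrix.toLin'_mul, hA.eq]
  have := (LinearMap.IsIdempotentElem.isProj_range _ h).trace
  rw [Matrix.trace_toLin'_eq] at this
  rw [this, Matrix.rank, Matrix.toLin'_apply']

theorem isUnitVec_vecOfMat {α β : Type*} [Fintype α] [Fintype β] {A : Matrix α β ℂ}
    (hA : (A * Aᴴ).trace = 1) : IsUnitVec (vecOfMat A) := by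
  have h : ((∑ x, Complex.normSq (vecOfMat A x) : ℝ) : ℂ) = 1 := by
    rw [← hA, Fintype.sum_prod_type]
    simp [Matrix.trace, Matrix.mul_apply, vecOfMat, Complex.mul_conj]
  exact_mod_cast h

/-- For an involution `S` on `ℂ⁴`, the bipartite vector with matrix `(1 + S) / (2√2)`: a
normalised multiple of the projection onto the fixed space of `S`. -/
noncomputable def projVec {n : Type*} [DecidableEq n] (S : Matrix n n ℂ) : n × n → ℂ :=
  vecOfMat (((2 * Real.sqrt 2 : ℝ) : ℂ)⁻¹ • (1 + S))

theorem sqrt_two_mul_self_complex : ((Real.sqrt 2 : ℝ) : ℂ) * (Real.sqrt 2 : ℝ) = 2 := by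
  exact_mod_cast Real.mul_self_sqrt (by norm_num : (0 : ℝ) ≤ 2)

theorem inv_two_sqrt_two_mul_self :
    ((2 * Real.sqrt 2 : ℝ) : ℂ)⁻¹ * ((2 * Real.sqrt 2 : ℝ) : ℂ)⁻¹ = 8⁻¹ := by
  rw [← mul_inv]
  congr 1
  push_cast
  linear_combination 4 * sqrt_two_mul_self_complex

section Involution

variable {n : Type*} [Fintype n] [DecidableEq n] {S : Matrix n n ℂ}

theorem one_add_mul_self_of_involution (h : S * S = 1) :
    (1 + S) * (1 + S) = (2 : ℂ) • (1 + S) := by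
  rw [mul_add, mul_one, add_mul, one_mul, h, two_smul]
  abel

theorem isUnitVec_projVec (hn : Fintype.card n = 4) (hS : S.IsHermitian) (h : S * S = 1)
    (htr : S.trace = 0) : IsUnitVec (projVec S) := by
  apply isUnitVec_vecOfMat
  rw [Matrix.conjTranspose_smul, Matrix.conjTranspose_add, Matrix.conjTranspose_one, hS.eq,
    Matrix.smul_mul, Matrix.mul_smul, one_add_mul_self_of_involution h, smul_smul,
    ← Complex.ofReal_inv, Complex.star_def, Complex.conj_ofReal, Complex.ofReal_inv,
    inv_two_sqrt_two_mul_self]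
  simp [htr, hn]
  norm_num

theorem schmidtRank_projVec_le (hn : Fintype.card n = 4) (h : S * S = 1)
    (htr : S.trace = 0) : schmidtRank (projVec S) ≤ 2 := by
  have hidem : IsIdempotentElem ((2 : ℂ)⁻¹ • (1 + S)) := by
    rw [IsIdempotentElem, Matrix.smul_mul, Matrix.mul_smul, one_add_mul_self_of_involution h]
    simp [smul_smul]
  have hrank : ((2 : ℂ)⁻¹ • (1 + S)).rank = 2 := by
    have := rank_eq_trace_of_isIdempotentElem hidem
    rw [Matrix.trace_smul, Matrix.trace_add, htr, Matrix.trace_one, hn] at this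
    exact_mod_cast this.trans (by norm_num : (2 : ℂ)⁻¹ • (((4 : ℕ) : ℂ) + 0) = (2 : ℕ))
  have hmat : matOfVec (projVec S) =
      ((2 : ℂ)⁻¹ • (1 + S)) * ((Real.sqrt 2 : ℂ)⁻¹ • (1 : Matrix n n ℂ)) := by
    rw [Matrix.mul_smul, mul_one, smul_smul]
    ext i j
    simp [matOfVec, projVec, vecOfMat]
  rw [schmidtRank, hmat, ← hrank]
  exact Matrix.rank_mul_le_left _ _

end Involution

/-- The Pauli matrices, starting with the identity. -/
def pauli : Fin 4 → Matrix (Fin 2) (Fin 2) ℂ :=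
  ![1, !![0, 1; 1, 0], !![0, -Complex.I; Complex.I, 0], !![1, 0; 0, -1]]

theorem pauli_isHermitian (a : Fin 4) : (pauli a).IsHermitian := by
  fin_cases a <;> ext i j <;> fin_cases i <;> fin_cases j <;> simp [pauli]

theorem pauli_mul_self (a : Fin 4) : pauli a * pauli a = 1 := by
  fin_cases a <;> ext i j <;> fin_cases i <;> fin_cases j <;> simp [pauli]

theorem pauli_trace {a : Fin 4} (ha : a ≠ 0) : (pauli a).trace = 0 := by
  fin_cases a <;> simp [pauli, Matrix.trace_fin_two] at ha ⊢

theorem pauli_kronecker_isHermitian (a b : Fin 4) : (pauli a ⊗ₖ pauli b).IsHermitian := by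
  rw [Matrix.IsHermitian, Matrix.conjTranspose_kronecker, (pauli_isHermitian a).eq,
    (pauli_isHermitian b).eq]

theorem pauli_kronecker_mul_self (a b : Fin 4) :
    (pauli a ⊗ₖ pauli b) * (pauli a ⊗ₖ pauli b) = 1 := by
  rw [← Matrix.mul_kronecker_mul, pauli_mul_self, pauli_mul_self, Matrix.one_kronecker_one]

theorem pauli_kronecker_trace {x : Fin 4 × Fin 4} (hx : x ≠ 0) :
    (pauli x.1 ⊗ₖ pauli x.2).trace = 0 := by
  rw [Matrix.trace_kronecker]
  by_cases h : x.1 = 0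
  · have h2 : x.2 ≠ 0 := fun h2 => hx (Prod.ext h h2)
    rw [pauli_trace h2, mul_zero]
  · rw [pauli_trace h, zero_mul]

/-- The eigenvalues of `ρ_F` on the Bell basis given by the Pauli matrices. -/
noncomputable def bellWeight (F : ℝ) : Fin 4 → ℝ :=
  ![F, (1 - F) / 3, (1 - F) / 3, (1 - F) / 3]

theorem bellWeight_nonneg {F : ℝ} (h0 : 0 ≤ F) (h1 : F ≤ 1) (a : Fin 4) :
    0 ≤ bellWeight F a := by
  have : 0 ≤ (1 - F) / 3 := by linarith
  fin_cases a <;> simpa [bellWeight]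

theorem sum_bellWeight (F : ℝ) : ∑ a, bellWeight F a = 1 := by
  simp [bellWeight, Fin.sum_univ_four]
  ring

theorem rhoF_two_eq_sum (F : ℝ) :
    rhoF 2 F = ∑ a, ((bellWeight F a / 2 : ℝ) : ℂ) • outer (vecOfMat (pauli a)) := by
  have h : ((Real.sqrt 2 : ℝ) : ℂ)⁻¹ * ((Real.sqrt 2 : ℝ) : ℂ)⁻¹ = 2⁻¹ := by
    rw [← mul_inv, sqrt_two_mul_self_complex]
  ext ⟨i, j⟩ ⟨k, l⟩
  fin_cases i <;> fin_cases j <;> fin_cases k <;> fin_cases l <;>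
    simp [rhoF, outer, psiPlus, vecOfMat, pauli, bellWeight, Fin.sum_univ_four, Matrix.sum_apply,
      h] <;>
    ring

theorem reorderedKron_rhoF_two_eq_sum (F : ℝ) :
    reorderedKron (rhoF 2 F) (rhoF 2 F) = ∑ x : Fin 4 × Fin 4,
      ((bellWeight F x.1 * bellWeight F x.2 : ℝ) : ℂ) •
        ((4 : ℂ)⁻¹ • outer (vecOfMat (pauli x.1 ⊗ₖ pauli x.2))) := by
  ext x y
  rw [reorderedKron, rhoF_two_eq_sum, Matrix.sum_apply, Fintype.sum_prod_type, Matrix.of_apply,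
    Matrix.sum_apply, Matrix.sum_apply, Finset.sum_mul_sum]
  refine Finset.sum_congr rfl fun a _ => Finset.sum_congr rfl fun b _ => ?_
  simp [outer, vecOfMat]
  ring

theorem outer_projVec_add_outer_projVec_neg {n : Type*} [DecidableEq n] (S : Matrix n n ℂ) :
    outer (projVec S) + outer (projVec (-S)) =
      (4 : ℂ)⁻¹ • outer (vecOfMat (1 : Matrix n n ℂ)) + (4 : ℂ)⁻¹ • outer (vecOfMat S) := by
  ext x y
  simp only [outer, projVec, vecOfMat, Matrix.add_apply, Matrix.smul_apply, Matrix.of_apply,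
    Matrix.neg_apply, smul_eq_mul, star_mul', star_add, star_neg, ← Complex.ofReal_inv,
    Complex.star_def, Complex.conj_ofReal]
  have h := inv_two_sqrt_two_mul_self
  rw [← Complex.ofReal_inv] at h
  linear_combination (2 * ((1 : Matrix n n ℂ) x.1 x.2 * starRingEnd ℂ ((1 : Matrix n n ℂ) y.1 y.2)
    + S x.1 x.2 * starRingEnd ℂ (S y.1 y.2))) * h

/-- For `N = 2` and `F = 1/√2`, the two-copy state `ρ_F ⊗ ρ_F`, regrouped
across the `(A₁A₂):(B₁B₂)` cut, belongs to `S_2`: it is a mixture of pure states of Schmidt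
rank at most 2. -/
theorem rhoF_two_copies_in_S2 :
    InSchmidtClass 2 (reorderedKron (rhoF 2 ((Real.sqrt 2))⁻¹) (rhoF 2 ((Real.sqrt 2))⁻¹)) := by
  set F : ℝ := (Real.sqrt 2)⁻¹ with hF
  have hF2 : F * F = 1 / 2 := by
    rw [hF, ← mul_inv, Real.mul_self_sqrt (by norm_num)]
    norm_num
  have hF0 : 0 ≤ F := by positivity
  have hF1 : F ≤ 1 := by nlinarith
  let w : Fin 4 × Fin 4 → ℝ := fun x => bellWeight F x.1 * bellWeight F x.2
  have hw0 : w 0 = 1 / 2 := hF2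
  have hw : ∑ x : {x : Fin 4 × Fin 4 // x ≠ 0}, w x = 1 / 2 := by
    have htot : ∑ x, w x = 1 := by
      rw [Fintype.sum_prod_type, ← Finset.sum_mul_sum, sum_bellWeight, one_mul]
    rw [Fintype.sum_eq_add_sum_subtype_ne w 0, hw0] at htot
    linarith
  let S : {x : Fin 4 × Fin 4 // x ≠ 0} × Bool → Matrix (Fin 2 × Fin 2) (Fin 2 × Fin 2) ℂ :=
    fun i => bif i.2 then pauli i.1.1.1 ⊗ₖ pauli i.1.1.2 else -(pauli i.1.1.1 ⊗ₖ pauli i.1.1.2)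
  have hherm : ∀ i, (S i).IsHermitian := by
    rintro ⟨x, _ | _⟩
    · exact (pauli_kronecker_isHermitian _ _).neg
    · exact pauli_kronecker_isHermitian _ _
  have hinv : ∀ i, S i * S i = 1 := by
    rintro ⟨x, _ | _⟩
    · exact (neg_mul_neg _ _).trans (pauli_kronecker_mul_self _ _)
    · exact pauli_kronecker_mul_self _ _
  have htr : ∀ i, (S i).trace = 0 := by
    rintro ⟨x, _ | _⟩
    · exact (Matrix.trace_neg _).trans (by rw [pauli_kronecker_trace x.2, neg_zero])
    · exact pauli_kronecker_trace x.2
  refine InSchmidtClass.of_fintype (fun i : {x : Fin 4 × Fin 4 // x ≠ 0} × Bool => w i.1)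
    (fun i => projVec (S i))
    (fun i => mul_nonneg (bellWeight_nonneg hF0 hF1 _) (bellWeight_nonneg hF0 hF1 _)) ?_
    (fun i => isUnitVec_projVec (by simp) (hherm i) (hinv i) (htr i))
    (fun i => schmidtRank_projVec_le (by simp) (hinv i) (htr i)) ?_
  · rw [Fintype.sum_prod_type]
    simp only [Fintype.sum_bool, Finset.sum_add_distrib, hw]
    norm_num
  · rw [reorderedKron_rhoF_two_eq_sum, Fintype.sum_eq_add_sum_subtype_ne _ 0,
      Fintype.sum_prod_type]
    simp only [Fintype.sum_bool, ← smul_add, S, cond_true, cond_false,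
      outer_projVec_add_outer_projVec_neg]
    simp only [smul_add, Finset.sum_add_distrib]
    rw [← Finset.sum_smul, ← Complex.ofReal_sum, hw, ← hw0]
    have h1 : pauli 0 ⊗ₖ pauli 0 = 1 := Matrix.one_kronecker_one
    simp only [Prod.fst_zero, Prod.snd_zero, h1, w]
end
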